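/- Equip P = k[x₁,x₂,x₃] with the Poisson bracket {x₁,x₂} = 0, {x₂,x₃} = 2x₁x₂, {x₃,x₁} = x₁². If G is a nontrivial finite subgroup of the graded Poisson automorphism group of P generated by Poisson reflections, then the invariant subalgebra P^G is not isomorphic to P as a Poisson algebra. -/

import Mathlib

open MvPolynomial

/-- The bracket on `k[x₁,x₂,x₃]` determined by the values `p12 = {x₁,x₂}`, `p23 = {x₂,x₃}`,
`p31 = {x₃,x₁}` via `{f,g} = Σ_{i<j} (∂f/∂xᵢ·∂g/∂xⱼ − ∂f/∂xⱼ·∂g/∂xᵢ)·{xᵢ,xⱼ}`. -/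
noncomputable def jacBracket {k : Type*} [Field k] (p12 p23 p31 : MvPolynomial (Fin 3) k)
    (f g : MvPolynomial (Fin 3) k) : MvPolynomial (Fin 3) k :=
  (pderiv 0 f * pderiv 1 g - pderiv 1 f * pderiv 0 g) * p12 +
    (pderiv 1 f * pderiv 2 g - pderiv 2 f * pderiv 1 g) * p23 +
    (pderiv 2 f * pderiv 0 g - pderiv 0 f * pderiv 2 g) * p31

/-- A graded Poisson automorphism: an algebra automorphism preserving the degree-one
component and the Poisson bracket. -/
def IsGradedPoissonAut {k : Type*} [Field k]
    (br : MvPolynomial (Fin 3) k → MvPolynomial (Fin 3) k → MvPolynomial (Fin 3) k)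
    (φ : MvPolynomial (Fin 3) k ≃ₐ[k] MvPolynomial (Fin 3) k) : Prop :=
  (∀ i, (φ (X i)).IsHomogeneous 1) ∧ ∀ f g, φ (br f g) = br (φ f) (φ g)

/-- A Poisson reflection: a graded Poisson automorphism of finite order whose restriction to
the degree-one part (as a matrix) has eigenvalues `1, 1, ξ` for some root of unity `ξ ≠ 1`. -/
def IsPoissonReflection {k : Type*} [Field k]
    (br : MvPolynomial (Fin 3) k → MvPolynomial (Fin 3) k → MvPolynomial (Fin 3) k)
    (φ : MvPolynomial (Fin 3) k ≃ₐ[k] MvPolynomial (Fin 3) k) : Prop :=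
  IsGradedPoissonAut br φ ∧ (∃ n, 0 < n ∧ φ ^ n = 1) ∧
    ∃ M : Matrix (Fin 3) (Fin 3) k, (∀ i, φ (X i) = ∑ j, C (M i j) * X j) ∧
      ∃ ξ : k, ξ ≠ 1 ∧ (∃ m, 0 < m ∧ ξ ^ m = 1) ∧
        M.charpoly = (Polynomial.X - 1) ^ 2 * (Polynomial.X - Polynomial.C ξ)

/-- `P^G ≅ P` as Poisson algebras: there is an injective algebra map `e : P → P` preserving
the bracket whose range is the invariant subalgebra `P^G`. -/
def InvariantsPoissonIso {k : Type*} [Field k]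
    (br : MvPolynomial (Fin 3) k → MvPolynomial (Fin 3) k → MvPolynomial (Fin 3) k)
    (G : Subgroup (MvPolynomial (Fin 3) k ≃ₐ[k] MvPolynomial (Fin 3) k)) : Prop :=
  ∃ e : MvPolynomial (Fin 3) k →ₐ[k] MvPolynomial (Fin 3) k,
    Function.Injective e ∧
    Set.range e = {f : MvPolynomial (Fin 3) k | ∀ φ ∈ G, φ f = f} ∧
    ∀ f g, e (br f g) = br (e f) (e g)

/-- The Jacobian determinant of three polynomials. -/
noncomputable def jac3 {k : Type*} [Field k] (f g h : MvPolynomial (Fin 3) k) :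
    MvPolynomial (Fin 3) k :=
  (pderiv 1 f * pderiv 2 g - pderiv 2 f * pderiv 1 g) * pderiv 0 h +
    (pderiv 2 f * pderiv 0 g - pderiv 0 f * pderiv 2 g) * pderiv 1 h +
    (pderiv 0 f * pderiv 1 g - pderiv 1 f * pderiv 0 g) * pderiv 2 h

theorem br_eq_jac {k : Type*} [Field k] (f g : MvPolynomial (Fin 3) k) :
    jacBracket 0 (2 * X 0 * X 1) (X 0 ^ 2) f g = jac3 f g (X 0 ^ 2 * X 1) := by
  have h0 : pderiv 0 (X 0 ^ 2 * X 1 : MvPolynomial (Fin 3) k) = 2 * X 0 * X 1 := by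
    rw [pderiv_mul, pderiv_pow]; simp
  have h1 : pderiv 1 (X 0 ^ 2 * X 1 : MvPolynomial (Fin 3) k) = X 0 ^ 2 := by
    rw [pderiv_mul, pderiv_pow]; simp
  have h2 : pderiv 2 (X 0 ^ 2 * X 1 : MvPolynomial (Fin 3) k) = 0 := by
    rw [pderiv_mul, pderiv_pow]; simp
  rw [jacBracket, jac3, h0, h1, h2]
  ring

theorem chain_rule {k : Type*} [Field k] (e : MvPolynomial (Fin 3) k →ₐ[k] MvPolynomial (Fin 3) k)
    (i : Fin 3) (p : MvPolynomial (Fin 3) k) :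
    pderiv i (e p) = e (pderiv 0 p) * pderiv i (e (X 0)) + e (pderiv 1 p) * pderiv i (e (X 1))
      + e (pderiv 2 p) * pderiv i (e (X 2)) := by
  induction p using MvPolynomial.induction_on with
  | C a =>
    have : e (C a) = C a := e.commutes a
    simp [this]
  | add p q hp hq => simp only [map_add, hp, hq]; ring
  | mul_X p j hp =>
    simp only [map_mul, pderiv_mul, map_add, hp]
    fin_cases j <;> simp <;> ring

theorem jac_chain {k : Type*} [Field k] (e : MvPolynomial (Fin 3) k →ₐ[k] MvPolynomial (Fin 3) k)
    (f g h : MvPolynomial (Fin 3) k) :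
    jac3 (e f) (e g) (e h) = e (jac3 f g h) * jac3 (e (X 0)) (e (X 1)) (e (X 2)) := by
  simp only [jac3, chain_rule e _ f, chain_rule e _ g, chain_rule e _ h, map_add, map_mul, map_sub]
  ring

theorem pderiv_swap {k : Type*} [Field k] (i j : Fin 3) (p : MvPolynomial (Fin 3) k) :
    pderiv i (pderiv j p) = pderiv j (pderiv i p) := by
  ext m
  by_cases h : i = j
  · rw [h]
  · have h' : j ≠ i := fun e => h e.symm
    simp only [coeff_pderiv, Finsupp.add_apply, Finsupp.single_apply, h, h', if_false]
    rw [add_right_comm]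
    push_cast
    ring

theorem reflection_form {k : Type*} [Field k] [CharZero k]
    (φ : MvPolynomial (Fin 3) k ≃ₐ[k] MvPolynomial (Fin 3) k)
    (h : IsPoissonReflection (jacBracket 0 (2 * X 0 * X 1) (X 0 ^ 2)) φ) :
    φ (X 0) = X 0 ∧ ∃ b s t : k, b ≠ 0 ∧ b ≠ 1 ∧ φ (X 1) = C b * X 1 ∧
      φ (X 2) = X 2 + C s * X 0 + C t * X 1 := by
  obtain ⟨⟨-, hbr⟩, -, M, hM, ξ, hξ1, ⟨m, hm, hξm⟩, hchar⟩ := h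
  have hξ0 : ξ ≠ 0 := by
    rintro rfl
    rw [zero_pow hm.ne'] at hξm
    exact zero_ne_one hξm
  have h0 := hM 0
  have h1 := hM 1
  have h2 := hM 2
  simp only [Fin.sum_univ_three] at h0 h1 h2
  have E1 := hbr (X 2) (X 0)
  have E2 := hbr (X 1) (X 2)
  have L1 : jacBracket 0 (2 * X 0 * X 1) (X 0 ^ 2) (X 2) (X 0) =
    (X 0 ^ 2 : MvPolynomial (Fin 3) k) := by simp [jacBracket]
  have L2 : jacBracket 0 (2 * X 0 * X 1) (X 0 ^ 2) (X 1) (X 2) =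
    (2 * X 0 * X 1 : MvPolynomial (Fin 3) k) := by simp [jacBracket]
  rw [L1] at E1
  rw [L2] at E2
  simp only [map_pow, map_mul, map_ofNat, h0, h1, h2] at E1 E2
  have ev1 := fun v : Fin 3 → k => congrArg (eval v) E1
  have ev2 := fun v : Fin 3 → k => congrArg (eval v) E2
  simp [jacBracket] at ev1 ev2
  have a2 := ev1 ![0, 1, 0]
  have a3 := ev1 ![0, 0, 1]
  have a1 := ev1 ![1, 0, 0]
  have b1 := ev2 ![1, 0, 0]
  have b3 := ev2 ![1, 0, 1]
  simp at a2 a3 a1 b1 b3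
  have ha : M 0 0 ≠ 0 := by
    intro h
    rw [h, a2, a3] at h0
    simp at h0
  have ev := fun t : k => congrArg (Polynomial.eval t) hchar
  simp only [Matrix.eval_charpoly] at ev
  simp [Matrix.det_fin_three, a2, a3] at ev
  have hb3 : M 1 2 = 0 := by
    rw [a3] at b3
    have h : 2 * M 0 0 * M 1 2 = 0 := by linear_combination b3 - b1
    simpa [ha] using h
  have hc3 : M 2 2 = M 0 0 := by
    rw [a3] at a1
    apply mul_right_cancel₀ ha
    linear_combination -a1
  have hb1 : M 1 0 = 0 := by
    rw [hc3, hb3] at b1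
    have h : 3 * M 0 0 * M 1 0 = 0 := by linear_combination b1
    simpa [ha] using h
  rw [hb3, hc3] at ev
  have e1 := ev 1
  have e2 := ev ξ
  have e0 := ev 0
  have hab : M 0 0 = 1 ∧ M 1 1 = ξ := by
    have q1 : (1 - M 0 0) ^ 2 * (1 - M 1 1) = 0 := by linear_combination e1
    have q2 : (ξ - M 0 0) ^ 2 * (ξ - M 1 1) = 0 := by linear_combination e2
    have q0 : M 0 0 ^ 2 * M 1 1 = ξ := by linear_combination -e0
    rcases mul_eq_zero.1 q1 with h | h
    · have h' : M 0 0 = 1 := (sub_eq_zero.1 (pow_eq_zero_iff two_ne_zero |>.1 h)).symm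
      refine ⟨h', ?_⟩
      rw [h'] at q0
      linear_combination q0
    · exfalso
      have h' : M 1 1 = 1 := (sub_eq_zero.1 h).symm
      rcases mul_eq_zero.1 q2 with h2 | h2
      · have h2' : M 0 0 = ξ := (sub_eq_zero.1 (pow_eq_zero_iff two_ne_zero |>.1 h2)).symm
        rw [h', h2'] at q0
        apply hξ1
        apply mul_left_cancel₀ hξ0
        linear_combination q0
      · apply hξ1
        linear_combination h2 + h'
  obtain ⟨hA, hB⟩ := hab
  refine ⟨?_, ξ, M 2 0, M 2 1, hξ0, hξ1, ?_, ?_⟩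
  · rw [h0, hA, a2, a3]; simp
  · rw [h1, hb1, hB, hb3]; simp
  · rw [h2, hc3, hA]; simp; ring

theorem group_form {k : Type*} [Field k]
    (S : Set (MvPolynomial (Fin 3) k ≃ₐ[k] MvPolynomial (Fin 3) k))
    (hS : ∀ φ ∈ S, φ (X 0) = X 0 ∧ ∃ b s t : k, b ≠ 0 ∧ b ≠ 1 ∧ φ (X 1) = C b * X 1 ∧
      φ (X 2) = X 2 + C s * X 0 + C t * X 1)
    (g : MvPolynomial (Fin 3) k ≃ₐ[k] MvPolynomial (Fin 3) k) (hg : g ∈ Subgroup.closure S) :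
    g (X 0) = X 0 ∧ ∃ b s t : k, b ≠ 0 ∧ g (X 1) = C b * X 1 ∧
      g (X 2) = X 2 + C s * X 0 + C t * X 1 := by
  have hC : ∀ (g : MvPolynomial (Fin 3) k ≃ₐ[k] MvPolynomial (Fin 3) k) (a : k), g (C a) = C a :=
    fun g a => g.commutes a
  induction hg using Subgroup.closure_induction with
  | mem x hx =>
    obtain ⟨h0, b, s, t, hb, -, h⟩ := hS x hx
    exact ⟨h0, b, s, t, hb, h⟩
  | one => exact ⟨rfl, 1, 0, 0, one_ne_zero, by simp, by simp⟩
  | mul x y _ _ hx hy =>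
    obtain ⟨h0, b, s, t, hb, h1, h2⟩ := hx
    obtain ⟨h0', b', sq, tq, hb', h1', h2'⟩ := hy
    refine ⟨by rw [AlgEquiv.mul_apply, h0', h0], b * b', s + sq, t + tq * b, mul_ne_zero hb hb', ?_, ?_⟩
    · rw [AlgEquiv.mul_apply, h1', map_mul, hC, h1, C_mul]; ring
    · rw [AlgEquiv.mul_apply, h2']
      simp only [map_add, map_mul, hC, h0, h1, h2]
      ring
  | inv x _ hx =>
    obtain ⟨h0, b, s, t, hb, h1, h2⟩ := hx
    refine ⟨?_, b⁻¹, -s, -t * b⁻¹, inv_ne_zero hb, ?_, ?_⟩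
    all_goals
      apply x.injective
      rw [← AlgEquiv.mul_apply, mul_inv_cancel]
      have hbb : (C b : MvPolynomial (Fin 3) k) * C b⁻¹ = 1 := by rw [← C_mul, mul_inv_cancel₀ hb, C_1]
      simp only [map_add, map_mul, map_neg, hC, h0, h1, h2, AlgEquiv.one_apply]
    · linear_combination -X 1 * hbb
    · linear_combination C t * X 1 * hbb

theorem invariants_exist {k : Type*} [Field k] [CharZero k]
    (G : Subgroup (MvPolynomial (Fin 3) k ≃ₐ[k] MvPolynomial (Fin 3) k)) (hfin : Finite G)
    (hG : ∀ g ∈ G, g (X 0) = X 0 ∧ ∃ b s t : k, b ≠ 0 ∧ g (X 1) = C b * X 1 ∧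
      g (X 2) = X 2 + C s * X 0 + C t * X 1) :
    ∃ n : ℕ, 0 < n ∧ ∃ s t : k, ∀ g ∈ G, g (X 0) = X 0 ∧ g (X 1 ^ n) = X 1 ^ n ∧
      g (C (n : k) * X 2 + C s * X 0 + C t * X 1) = C (n : k) * X 2 + C s * X 0 + C t * X 1 := by
  classical
  have := Fintype.ofFinite G
  have hC : ∀ (g : MvPolynomial (Fin 3) k ≃ₐ[k] MvPolynomial (Fin 3) k) (a : k), g (C a) = C a :=
    fun g a => g.commutes a
  choose h0 b s t hb h1 h2 using fun g : G => hG g.1 g.2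
  refine ⟨Fintype.card G, Fintype.card_pos, ∑ g, s g, ∑ g, t g, fun g hg => ⟨h0 ⟨g, hg⟩, ?_, ?_⟩⟩
  · have hp : ∀ m : ℕ, (g ^ m) (X 1) = C (b ⟨g, hg⟩ ^ m) * X 1 := by
      intro m
      induction m with
      | zero => simp
      | succ m ih =>
        rw [pow_succ, AlgEquiv.mul_apply, h1 ⟨g, hg⟩, map_mul, hC, ih, pow_succ, C_mul]
        ring
    have h := hp (Fintype.card G)
    have h' : g ^ Fintype.card G = 1 := by
      have := pow_card_eq_one (x := (⟨g, hg⟩ : G))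
      exact congrArg Subtype.val this
    rw [h', AlgEquiv.one_apply] at h
    rw [map_pow, h1 ⟨g, hg⟩]
    have h3 : (C (b ⟨g, hg⟩ ^ Fintype.card G) : MvPolynomial (Fin 3) k) = 1 := by
      apply mul_right_cancel₀ (X_ne_zero (R := k) (1 : Fin 3))
      rw [one_mul, ← h]
    rw [mul_pow, ← C_pow, h3, one_mul]
  · have hs : (C (Fintype.card G : k) * X 2 + C (∑ g, s g) * X 0 + C (∑ g, t g) * X 1 :
        MvPolynomial (Fin 3) k) = ∑ g : G, g.1 (X 2) := by
      rw [Finset.sum_congr rfl (fun g _ => h2 g)]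
      simp [Finset.sum_add_distrib, Finset.sum_mul]
    rw [hs, map_sum]
    exact Fintype.sum_equiv (Equiv.mulLeft (⟨g, hg⟩ : G)) _ _ (fun x => rfl)

theorem main_contra {k : Type*} [Field k] [CharZero k]
    (e : MvPolynomial (Fin 3) k →ₐ[k] MvPolynomial (Fin 3) k)
    (hbr : ∀ f g, e (jac3 f g (X 0 ^ 2 * X 1)) = jac3 (e f) (e g) (X 0 ^ 2 * X 1))
    (n : ℕ) (hn : 0 < n) (s t : k) (F1 F2 F3 : MvPolynomial (Fin 3) k)
    (h1 : e F1 = X 0) (h2 : e F2 = X 1 ^ n) (h3 : e F3 = C (n : k) * X 2 + C s * X 0 + C t * X 1)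
    (φ : MvPolynomial (Fin 3) k ≃ₐ[k] MvPolynomial (Fin 3) k)
    (hφ : ∀ f, φ (e f) = e f) (b sq tq : k) (hb : b ≠ 1)
    (hφ0 : φ (X 0) = X 0) (hφ1 : φ (X 1) = C b * X 1)
    (hφ2 : φ (X 2) = X 2 + C sq * X 0 + C tq * X 1) : False := by
  have hnk : (n : k) ≠ 0 := Nat.cast_ne_zero.mpr hn.ne'
  obtain ⟨J, hJ⟩ : ∃ J, J = jac3 (e (X 0)) (e (X 1)) (e (X 2)) := ⟨_, rfl⟩
  obtain ⟨U, hU⟩ : ∃ U, U = e (X 0 ^ 2 * X 1) := ⟨_, rfl⟩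
  have key : ∀ f g, jac3 (e f) (e g) U = J * jac3 (e f) (e g) (X 0 ^ 2 * X 1) := by
    intro f g
    rw [hU, jac_chain, hbr, hJ, mul_comm]
  have d1 : ∀ i, pderiv i (X 1 ^ n : MvPolynomial (Fin 3) k) =
      (n : MvPolynomial (Fin 3) k) * X 1 ^ (n - 1) * pderiv i (X 1) := fun i => pderiv_pow
  -- J divides a power of y
  have hdiv : J ∣ X 1 ^ (n - 1) := by
    have h := jac_chain e F1 F2 F3
    rw [h1, h2, h3, ← hJ] at h
    have h' : jac3 (X 0) (X 1 ^ n) (C (n : k) * X 2 + C s * X 0 + C t * X 1) =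
        C ((n : k) * n) * X 1 ^ (n - 1) := by
      simp [jac3, d1]
      ring
    rw [h'] at h
    refine ⟨C ((n : k) * n)⁻¹ * e (jac3 F1 F2 F3), ?_⟩
    have hc : (C ((n : k) * n)⁻¹ * C ((n : k) * n) : MvPolynomial (Fin 3) k) = 1 := by
      rw [← C_mul, inv_mul_cancel₀ (mul_ne_zero hnk hnk), C_1]
    linear_combination C ((n : k) * n)⁻¹ * h - X 1 ^ (n - 1) * hc
  obtain ⟨j, -, hj⟩ := (dvd_prime_pow (X_prime (R := k) (i := (1 : Fin 3))) _).1 hdiv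
  obtain ⟨u, hu⟩ := hj.symm
  obtain ⟨c, hc, hcu⟩ := isUnit_iff_eq_C_of_isReduced.1 u.isUnit
  have hc0 : c ≠ 0 := hc.ne_zero
  rw [hcu] at hu
  -- semi-invariance
  have hj0 : j ≠ 0 := by
    rintro rfl
    have h : jac3 (φ (e (X 0))) (φ (e (X 1))) (φ (e (X 2))) =
        φ (jac3 (e (X 0)) (e (X 1)) (e (X 2))) * jac3 (φ (X 0)) (φ (X 1)) (φ (X 2)) :=
      jac_chain φ.toAlgHom (e (X 0)) (e (X 1)) (e (X 2))
    rw [hφ, hφ, hφ, ← hJ, hφ0, hφ1, hφ2] at h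
    have hφJ : φ J = J := by
      rw [← hu]; simp only [pow_zero, one_mul]; exact φ.commutes c
    have h' : jac3 (X 0) (C b * X 1) (X 2 + C sq * X 0 + C tq * X 1) = C b := by
      simp [jac3]
    rw [hφJ, h', ← hu, pow_zero, one_mul, ← C_mul] at h
    have := C_injective _ _ h
    apply hb
    apply mul_left_cancel₀ hc0
    rw [← this, mul_one]
  -- derivatives of U
  have dO0 : pderiv 0 (X 0 ^ 2 * X 1 : MvPolynomial (Fin 3) k) = 2 * X 0 * X 1 := by
    rw [pderiv_mul, pderiv_pow]; simp
  have dO1 : pderiv 1 (X 0 ^ 2 * X 1 : MvPolynomial (Fin 3) k) = X 0 ^ 2 := by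
    rw [pderiv_mul, pderiv_pow]; simp
  have dO2 : pderiv 2 (X 0 ^ 2 * X 1 : MvPolynomial (Fin 3) k) = 0 := by
    rw [pderiv_mul, pderiv_pow]; simp
  have k12 := key F1 F2
  have k13 := key F1 F3
  have k23 := key F2 F3
  rw [h1, h2] at k12
  rw [h1, h3] at k13
  rw [h2, h3] at k23
  have hnP : (n : MvPolynomial (Fin 3) k) ≠ 0 := Nat.cast_ne_zero.mpr hn.ne'
  have hX : (X 1 : MvPolynomial (Fin 3) k) ^ (n - 1) ≠ 0 := pow_ne_zero _ (X_ne_zero _)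
  simp only [jac3, dO0, dO1, dO2, d1] at k12 k13 k23
  simp at k12 k13 k23
  have U2 : pderiv 2 U = 0 := by
    simpa [hn.ne', X_ne_zero] using k12
  rw [U2] at k13 k23
  have U1 : pderiv 1 U = J * X 0 ^ 2 := by
    apply mul_left_cancel₀ hnP
    linear_combination -k13
  have U0 : pderiv 0 U = J * (2 * X 0 * X 1) := by
    apply mul_left_cancel₀ (mul_ne_zero hnP (mul_ne_zero hnP hX))
    linear_combination k23
  have hsw := pderiv_swap 0 1 U
  rw [U0, U1, ← hu] at hsw
  have dj : ∀ i, pderiv i (X 1 ^ j : MvPolynomial (Fin 3) k) =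
      (j : MvPolynomial (Fin 3) k) * X 1 ^ (j - 1) * pderiv i (X 1) := fun i => pderiv_pow
  have dx : ∀ i, pderiv i (X 0 ^ 2 : MvPolynomial (Fin 3) k) =
      2 * X 0 * pderiv i (X 0) := fun i => by rw [pderiv_pow]; simp
  have d2 : ∀ i, pderiv i (2 : MvPolynomial (Fin 3) k) = 0 := fun i => (pderiv i).map_natCast 2
  simp only [pderiv_mul, dj, dx, pderiv_C, d2] at hsw
  have hev := congrArg (eval (fun _ => (1 : k))) hsw
  simp at hev
  rcases hev with h | h
  · exact hj0 h
  · exact hc0 h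

/-- With this bracket, if `G` is a nontrivial finite subgroup of graded Poisson
automorphisms generated by Poisson reflections, then `P^G` is not isomorphic to `P`
as a Poisson algebra. -/
theorem stmt_12 {k : Type*} [Field k] [IsAlgClosed k] [CharZero k]
    (G : Subgroup (MvPolynomial (Fin 3) k ≃ₐ[k] MvPolynomial (Fin 3) k))
    (hG : ∀ φ ∈ G, IsGradedPoissonAut (jacBracket 0 (2 * X 0 * X 1) (X 0 ^ 2)) φ)
    (hfin : Finite G) (hnt : G ≠ ⊥)
    (hgen : ∃ S : Set (MvPolynomial (Fin 3) k ≃ₐ[k] MvPolynomial (Fin 3) k),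
      (∀ φ ∈ S, IsPoissonReflection (jacBracket 0 (2 * X 0 * X 1) (X 0 ^ 2)) φ) ∧ Subgroup.closure S = G) :
    ¬ InvariantsPoissonIso (jacBracket 0 (2 * X 0 * X 1) (X 0 ^ 2)) G := by
  rintro ⟨e, -, hran, hbr⟩
  obtain ⟨S, hS, rfl⟩ := hgen
  have hS' := fun φ hφ => reflection_form φ (hS φ hφ)
  have hform := group_form S hS'
  obtain ⟨n, hn, s, t, hinv⟩ := invariants_exist _ hfin hform
  have hmem : ∀ f, (∀ φ ∈ Subgroup.closure S, φ f = f) → ∃ F, e F = f := by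
    intro f hf
    have : f ∈ Set.range e := by rw [hran]; exact hf
    exact this
  have hfix : ∀ f, ∀ φ ∈ Subgroup.closure S, φ (e f) = e f := by
    intro f
    have : e f ∈ Set.range e := ⟨f, rfl⟩
    rw [hran] at this
    exact this
  obtain ⟨F1, h1⟩ := hmem _ fun φ hφ => (hinv φ hφ).1
  obtain ⟨F2, h2⟩ := hmem _ fun φ hφ => (hinv φ hφ).2.1
  obtain ⟨F3, h3⟩ := hmem _ fun φ hφ => (hinv φ hφ).2.2
  obtain ⟨φ, hφ⟩ : S.Nonempty := by
    rw [Set.nonempty_iff_ne_empty]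
    rintro rfl
    exact hnt Subgroup.closure_empty
  obtain ⟨p0, b, sq, tq, -, hb, p1, p2⟩ := hS' φ hφ
  refine main_contra e (fun f g => ?_) n hn s t F1 F2 F3 h1 h2 h3 φ
    (fun f => hfix f φ (Subgroup.subset_closure hφ)) b sq tq hb p0 p1 p2
  rw [← br_eq_jac, ← br_eq_jac, hbr]
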